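/- Let G be a group and H ≤ G a subgroup that is m-displaceable in G, i.e., there exist φ₀ = 1, φ₁, …, φ_m ∈ G such that the subgroups φ_iHφ_i⁻¹, i = 0,…,m, pairwise commute elementwise. Then for every element w of the commutator subgroup [H,H], the stable commutator lengths satisfy scl_G(w) ≤ scl_H(w)/(m+1). -/

import Mathlib

open scoped commutatorElement

/-- The commutator length of `x` with respect to the subgroup `H`: the least
`n` such that `x` is a product of `n` commutators of elements of `H`. -/
noncomputable def clIn {G : Type*} [Group G] (H : Subgroup G) (x : G) : ℕ :=
  sInf {n : ℕ | ∃ f g : Fin n → G, (∀ i, f i ∈ H ∧ g i ∈ H) ∧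
    x = (List.ofFn fun i => ⁅f i, g i⁆).prod}

/-!
Since the conjugates `φ i * H * (φ i)⁻¹` commute, `h ↦ ∏ i, φ i * h * (φ i)⁻¹` is a homomorphism
`H →* G`, so it does not increase commutator length. Each of its `m + 1` factors differs from `h`
by a single commutator `⁅φ i, h⁻¹⁆`, and conjugating commutators yields commutators, so the product
differs from `h ^ (m + 1)` by `m + 1` commutators. Hence `cl_G (h ^ (m + 1)) ≤ cl_H h + (m + 1)`;
for `h = w ^ n`, dividing by `n * (m + 1)` makes the additive error vanish in the limit.
-/

open Filter Topology
open scoped Pointwise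

section PowersOfSets

variable {G ι : Type*} [Group G] {S : Set G}

theorem exists_mem_pow_of_mem_closure (hS : S⁻¹ = S) {x : G} (hx : x ∈ Subgroup.closure S) :
    ∃ n : ℕ, x ∈ S ^ n := by
  induction hx using Subgroup.closure_induction with
  | mem x hx => exact ⟨1, by rwa [pow_one]⟩
  | one => exact ⟨0, by rw [pow_zero]; exact Set.one_mem_one⟩
  | mul x y _ _ ihx ihy =>
    obtain ⟨n, hn⟩ := ihx
    obtain ⟨k, hk⟩ := ihy
    exact ⟨n + k, pow_add S n k ▸ Set.mul_mem_mul hn hk⟩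
  | inv x _ ih =>
    obtain ⟨n, hn⟩ := ih
    exact ⟨n, by rwa [← hS, inv_pow, Set.inv_mem_inv]⟩

theorem inv_noncommProd_mul_pow_mem_pow (hS : ∀ g, ∀ c ∈ S, g * c * g⁻¹ ∈ S) {f : ι → G} {x : G}
    (s : Finset ι) (hf : ∀ i ∈ s, (f i)⁻¹ * x ∈ S)
    (hc : (s : Set ι).Pairwise (Function.onFun Commute f)) :
    (s.noncommProd f hc)⁻¹ * x ^ s.card ∈ S ^ s.card := by
  induction s using Finset.cons_induction with
  | empty => simp
  | cons a s ha ih =>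
    rw [Finset.noncommProd_cons, Finset.card_cons]
    set P := s.noncommProd f (hc.mono (by simp))
    have hsplit : (f a * P)⁻¹ * x ^ (s.card + 1) =
        P⁻¹ * ((f a)⁻¹ * x) * P⁻¹⁻¹ * (P⁻¹ * x ^ s.card) := by
      group
    rw [hsplit, pow_succ' S]
    exact Set.mul_mem_mul (hS _ _ (hf a (s.mem_cons_self a)))
      (ih (fun i hi ↦ hf i (Finset.mem_cons_of_mem hi)) _)

end PowersOfSets

section CommutatorLength

variable {G K : Type*} [Group G] [Group K] {x : G} {n : ℕ}

theorem inv_commutatorSet : (commutatorSet G)⁻¹ = commutatorSet G := by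
  have inv_mem {c : G} (hc : c ∈ commutatorSet G) : c⁻¹ ∈ commutatorSet G := by
    obtain ⟨a, b, rfl⟩ := hc
    exact ⟨b, a, (commutatorElement_inv a b).symm⟩
  exact Set.Subset.antisymm (fun c hc ↦ inv_inv c ▸ inv_mem hc) fun _ ↦ inv_mem

theorem conj_mem_commutatorSet (g c : G) (hc : c ∈ commutatorSet G) :
    g * c * g⁻¹ ∈ commutatorSet G := by
  obtain ⟨a, b, rfl⟩ := hc
  exact ⟨_, _, (conjugate_commutatorElement a b g).symm⟩

theorem image_commutatorSet_subset (f : G →* K) : f '' commutatorSet G ⊆ commutatorSet K := by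
  rintro _ ⟨_, ⟨a, b, rfl⟩, rfl⟩
  exact ⟨f a, f b, (map_commutatorElement f a b).symm⟩

theorem image_commutatorSet_of_surjective {f : G →* K} (hf : Function.Surjective f) :
    f '' commutatorSet G = commutatorSet K := by
  refine (image_commutatorSet_subset f).antisymm ?_
  rintro _ ⟨a, b, rfl⟩
  obtain ⟨a, rfl⟩ := hf a
  obtain ⟨b, rfl⟩ := hf b
  exact ⟨⁅a, b⁆, ⟨a, b, rfl⟩, map_commutatorElement f a b⟩

theorem map_mem_commutatorSet_pow (f : G →* K) (hx : x ∈ commutatorSet G ^ n) :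
    f x ∈ commutatorSet K ^ n := by
  apply Set.pow_subset_pow_left (image_commutatorSet_subset f)
  rw [← Set.image_pow]
  exact Set.mem_image_of_mem f hx

/-- The commutator length of `x` in `G`: the least `n` such that `x` is a product of `n`
commutators. As for `clIn`, the value is `0` when `x` is not in the commutator subgroup. -/
noncomputable def commutatorLength (x : G) : ℕ :=
  sInf {n : ℕ | x ∈ commutatorSet G ^ n}

theorem commutatorLength_le_of_mem_pow (hx : x ∈ commutatorSet G ^ n) : commutatorLength x ≤ n :=
  Nat.sInf_le hx

theorem mem_commutatorSet_pow_commutatorLength (hx : x ∈ commutator G) :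
    x ∈ commutatorSet G ^ commutatorLength x := by
  rw [commutator_eq_closure] at hx
  exact Nat.sInf_mem (exists_mem_pow_of_mem_closure inv_commutatorSet hx)

theorem clIn_eq_sInf_mem_image_pow (H : Subgroup G) (x : G) :
    clIn H x = sInf {n : ℕ | x ∈ (H.subtype '' commutatorSet H) ^ n} := by
  unfold clIn
  congr 1 with n
  rw [Set.mem_ofPred_eq, Set.mem_ofPred_eq, Set.mem_pow]
  constructor
  · rintro ⟨a, b, hab, rfl⟩
    exact ⟨fun i ↦ ⟨⁅a i, b i⁆, ⁅⟨a i, (hab i).1⟩, ⟨b i, (hab i).2⟩⁆, ⟨_, _, rfl⟩, rfl⟩, rfl⟩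
  · rintro ⟨c, rfl⟩
    choose d hd hdc using fun i ↦ (c i).2
    choose a b hab using hd
    refine ⟨fun i ↦ a i, fun i ↦ b i, fun i ↦ ⟨(a i).2, (b i).2⟩, ?_⟩
    simp only [← hdc, ← hab, map_commutatorElement, Subgroup.subtype_apply]

theorem clIn_coe {H : Subgroup G} (x : H) : clIn H (x : G) = commutatorLength x := by
  simp only [clIn_eq_sInf_mem_image_pow, ← Set.image_pow, commutatorLength]
  congr 1 with n
  exact H.subtype_injective.mem_set_image

theorem clIn_top (x : G) : clIn (⊤ : Subgroup G) x = commutatorLength x := by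
  have hsurj : Function.Surjective (⊤ : Subgroup G).subtype :=
    fun y ↦ ⟨⟨y, Subgroup.mem_top y⟩, rfl⟩
  rw [clIn_eq_sInf_mem_image_pow, image_commutatorSet_of_surjective hsurj, commutatorLength]

end CommutatorLength

section Displacement

variable {G ι : Type*} [Group G] {H : Subgroup G} {φ : ι → G}

/-- The family `φ` displaces `H` if the conjugates `φ i * H * (φ i)⁻¹` commute pairwise. An
`m`-displaceable subgroup is one displaced by a family `1 = φ 0, φ 1, …, φ m`. -/
def Displaces (φ : ι → G) (H : Subgroup G) : Prop :=
  Pairwise fun i j ↦ ∀ a ∈ H, ∀ b ∈ H, Commute (φ i * a * (φ i)⁻¹) (φ j * b * (φ j)⁻¹)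

variable [Fintype ι]

namespace Displaces

/-- The homomorphism `h ↦ ∏ i, φ i * h * (φ i)⁻¹` attached to a family `φ` displacing `H`: the
diagonal map into `ι → H`, followed by conjugation and multiplication in `G`. -/
noncomputable def diagonalHom (hφ : Displaces φ H) : H →* G :=
  (MonoidHom.noncommPiCoprod (fun i ↦ (MulAut.conj (φ i)).toMonoidHom.comp H.subtype)
    fun _ _ hij a b ↦ hφ hij a a.2 b b.2).comp (MonoidHom.pi fun _ ↦ MonoidHom.id H)

theorem diagonalHom_apply (hφ : Displaces φ H) (x : H) :
    hφ.diagonalHom x = Finset.univ.noncommProd (fun i ↦ φ i * x * (φ i)⁻¹)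
      fun _ _ _ _ hij ↦ hφ hij x x.2 x x.2 :=
  rfl

theorem inv_diagonalHom_mul_pow_mem (hφ : Displaces φ H) (x : H) :
    (hφ.diagonalHom x)⁻¹ * (x : G) ^ Fintype.card ι ∈ commutatorSet G ^ Fintype.card ι := by
  have hfactor (i : ι) : (φ i * x * (φ i)⁻¹)⁻¹ * x ∈ commutatorSet G :=
    ⟨φ i, (x : G)⁻¹, by rw [commutatorElement_def, inv_inv, conj_inv]⟩
  rw [diagonalHom_apply]
  exact inv_noncommProd_mul_pow_mem_pow conj_mem_commutatorSet Finset.univ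
    (fun i _ ↦ hfactor i) _

theorem commutatorLength_pow_card_le (hφ : Displaces φ H) {x : H} (hx : x ∈ commutator H) :
    commutatorLength ((x : G) ^ Fintype.card ι) ≤ commutatorLength x + Fintype.card ι := by
  apply commutatorLength_le_of_mem_pow
  rw [pow_add, ← mul_inv_cancel_left (hφ.diagonalHom x) ((x : G) ^ Fintype.card ι)]
  exact Set.mul_mem_mul
    (map_mem_commutatorSet_pow hφ.diagonalHom (mem_commutatorSet_pow_commutatorLength hx))
    (hφ.inv_diagonalHom_mul_pow_mem x)

theorem clIn_top_pow_card_le (hφ : Displaces φ H) {x : G} (hx : x ∈ ⁅H, H⁆) :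
    clIn (⊤ : Subgroup G) (x ^ Fintype.card ι) ≤ clIn H x + Fintype.card ι := by
  rw [← H.map_subtype_commutator] at hx
  obtain ⟨y, hy, rfl⟩ := hx
  rw [Subgroup.subtype_apply, clIn_top, clIn_coe]
  exact hφ.commutatorLength_pow_card_le hy

end Displaces

end Displacement

theorem le_div_of_tendsto_div_of_le_add {a b : ℕ → ℝ} {A B C : ℝ} {k : ℕ} (hk : k ≠ 0)
    (hab : ∀ n, a (n * k) ≤ b n + C) (ha : Tendsto (fun n ↦ a n / n) atTop (𝓝 A))
    (hb : Tendsto (fun n ↦ b n / n) atTop (𝓝 B)) : A ≤ B / k := by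
  have hsubseq : Tendsto (fun n ↦ a (n * k) / (n * k : ℕ)) atTop (𝓝 A) :=
    ha.comp (tendsto_id.atTop_mul_const' (Nat.pos_of_ne_zero hk))
  have hbound : Tendsto (fun n : ℕ ↦ (b n / n + C / n) / k) atTop (𝓝 (B / k)) := by
    simpa using (hb.add (tendsto_const_div_atTop_nhds_zero_nat C)).div_const (k : ℝ)
  refine le_of_tendsto_of_tendsto' hsubseq hbound fun n ↦ ?_
  rw [Nat.cast_mul, ← div_div, ← add_div]
  gcongr
  exact hab n

/-- If `H` is `m`-displaceable in `G`, then for `w ∈ [H,H]` the stable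
commutator lengths (the limits of `cl(wⁿ)/n`) satisfy
`scl_G(w) ≤ scl_H(w)/(m+1)`. -/
theorem scl_le_of_m_displaceable {G : Type*} [Group G]
    (H : Subgroup G) (m : ℕ) (hm : 1 ≤ m)
    (φ : Fin (m + 1) → G) (hφ0 : φ 0 = 1)
    (hcomm : ∀ i j : Fin (m + 1), i ≠ j →
      ∀ a ∈ H, ∀ b ∈ H, Commute (φ i * a * (φ i)⁻¹) (φ j * b * (φ j)⁻¹))
    (w : G) (hw : w ∈ ⁅H, H⁆)
    (LH LG : ℝ)
    (hLH : Filter.Tendsto (fun n : ℕ => (clIn H (w ^ n) : ℝ) / n)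
      Filter.atTop (nhds LH))
    (hLG : Filter.Tendsto (fun n : ℕ => (clIn (⊤ : Subgroup G) (w ^ n) : ℝ) / n)
      Filter.atTop (nhds LG)) :
    LG ≤ LH / (m + 1) := by
  have hφ : Displaces φ H := fun i j ↦ hcomm i j
  have hcl (n : ℕ) :
      (clIn (⊤ : Subgroup G) (w ^ (n * (m + 1))) : ℝ) ≤ clIn H (w ^ n) + (m + 1 : ℕ) := by
    have h := hφ.clIn_top_pow_card_le (pow_mem hw n)
    rw [Fintype.card_fin, ← pow_mul] at h
    exact_mod_cast h
  exact_mod_cast le_div_of_tendsto_div_of_le_add m.succ_ne_zero hcl hLG hLH
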